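/- Let S be a positive integer, n a positive integer, 0 < ε < 1, and Q ∈ M_S. Then R_P(S, n(1−ε)/4, Q, 0) ≥ (1/4)·R_P(S, n, Q, ε) − (1/2)·e^{−n(1−ε)/8} − (1/2)·ε². -/

import Mathlib

open scoped BigOperators ENNReal

/-- The Poisson(lam) probability mass function on the nonnegative integers. -/
noncomputable def poissonPMF (lam : ℝ) (k : ℕ) : ℝ :=
  Real.exp (-lam) * lam ^ k / (Nat.factorial k)

/-- `P` is a probability vector on `{1,…,S}` (an element of `M_S`). -/
def IsDist {S : ℕ} (q : Fin S → ℝ) : Prop :=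
  (∀ i, 0 ≤ q i) ∧ ∑ i, q i = 1

/-- `P ∈ M_S(ε)`: an approximate probability vector, `p_i ≥ 0` and `|Σ p_i − 1| ≤ ε`. -/
def ApproxDist {S : ℕ} (ε : ℝ) (p : Fin S → ℝ) : Prop :=
  (∀ i, 0 ≤ p i) ∧ |∑ i, p i - 1| ≤ ε

/-- Joint pmf of `S` independent coordinates `X_i ~ Poisson(t p_i)`, real rate `t`. -/
noncomputable def prodPMFR {S : ℕ} (t : ℝ) (p : Fin S → ℝ) (x : Fin S → ℕ) : ℝ :=
  ∏ i, poissonPMF (t * p i) (x i)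

/-- The `L₁` distance between two vectors. -/
noncomputable def L1dist {S : ℕ} (p q : Fin S → ℝ) : ℝ :=
  ∑ i, |p i - q i|

/-- The minimax risk `R_P(S, t, Q, ε)` over `M_S(ε)` in the Poisson sampling model
with rate `t`, valued in `ℝ≥0∞`. -/
noncomputable def RP (S : ℕ) (t : ℝ) (q : Fin S → ℝ) (ε : ℝ) : ℝ≥0∞ :=
  ⨅ est : (Fin S → ℕ) → ℝ, ⨆ p : {p : Fin S → ℝ // ApproxDist ε p},
    ∑' x : Fin S → ℕ,
      ENNReal.ofReal (prodPMFR t p.1 x * (est x - L1dist p.1 q) ^ 2)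

lemma exp_hasSum (a : ℝ) : HasSum (fun k : ℕ => a ^ k / (k.factorial : ℝ)) (Real.exp a) := by
  rw [Real.exp_eq_exp_ℝ]
  exact NormedSpace.expSeries_div_hasSum_exp a

lemma exp_tsum_ennreal (a : ℝ) (ha : 0 ≤ a) :
    ∑' k : ℕ, ENNReal.ofReal (a ^ k / (k.factorial : ℝ)) = ENNReal.ofReal (Real.exp a) := by
  rw [← (exp_hasSum a).tsum_eq, ENNReal.ofReal_tsum_of_nonneg _ (exp_hasSum a).summable]
  intro k; positivity

lemma group_tsum {S : ℕ} (a : Fin S → ℝ) (ha : ∀ i, 0 ≤ a i) (f : ℕ → ℝ≥0∞) :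
    ∑' x : Fin S → ℕ, f (∑ i, x i) * ENNReal.ofReal (∏ i, (a i ^ x i / ((x i).factorial : ℝ))) =
    ∑' k : ℕ, f k * ENNReal.ofReal ((∑ i, a i) ^ k / (k.factorial : ℝ)) := by
  classical
  rw [← ENNReal.tsum_fiberwise _ (fun x : Fin S → ℕ => ∑ i, x i)]
  refine tsum_congr fun k => ?_
  have hs : ((fun x : Fin S → ℕ => ∑ i, x i) ⁻¹' {k}) =
      ((Finset.piAntidiag Finset.univ k : Finset (Fin S → ℕ)) : Set (Fin S → ℕ)) := by
    ext x; simp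
  rw [hs]
  rw [Finset.tsum_subtype' (Finset.piAntidiag Finset.univ k : Finset (Fin S → ℕ))
    (fun x : Fin S → ℕ => f (∑ i, x i) *
      ENNReal.ofReal (∏ i, (a i ^ x i / ((x i).factorial : ℝ))))]
  rw [Finset.sum_pow_eq_sum_piAntidiag, Finset.sum_div, ENNReal.ofReal_sum_of_nonneg, Finset.mul_sum]
  · refine Finset.sum_congr rfl fun x hx => ?_
    have hx' : ∑ i, x i = k := by simpa using hx
    rw [hx']
    congr 2
    have h := Nat.multinomial_spec Finset.univ x
    rw [hx'] at h
    have h' : (∏ i, ((x i).factorial : ℝ)) * (Nat.multinomial Finset.univ x : ℝ) = k.factorial := by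
      exact_mod_cast h
    have hp : (∏ i, ((x i).factorial : ℝ)) ≠ 0 := by
      rw [Finset.prod_ne_zero_iff]; intro i _; positivity
    rw [Finset.prod_div_distrib, ← h', div_eq_div_iff hp (by rw [h']; positivity)]
    ring
  · intro x _
    have : 0 ≤ ∏ i, a i ^ x i := Finset.prod_nonneg fun i _ => pow_nonneg (ha i) _
    positivity

lemma vander {S : ℕ} (x : Fin S → ℕ) (h : ℕ → ℝ) :
    ∑ y ∈ Fintype.piFinset (fun i => Finset.range (x i + 1)),
      h (∑ i, y i) * ∏ i, ((x i).choose (y i) : ℝ) =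
    ∑ m ∈ Finset.range (∑ i, x i + 1), h m * ((∑ i, x i).choose m : ℝ) := by
  classical
  have hmaps : ∀ y ∈ Fintype.piFinset (fun i => Finset.range (x i + 1)),
      (∑ i, y i) ∈ Finset.range (∑ i, x i + 1) := by
    intro y hy
    rw [Fintype.mem_piFinset] at hy
    rw [Finset.mem_range, Nat.lt_succ_iff]
    exact Finset.sum_le_sum fun i _ => by have := hy i; rw [Finset.mem_range] at this; omega
  rw [← Finset.sum_fiberwise_of_maps_to hmaps]
  refine Finset.sum_congr rfl fun m _ => ?_
  have key : ((1 + Polynomial.X : Polynomial ℝ) ^ (∑ i, x i)).coeff m =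
      ∑ y ∈ Fintype.piFinset (fun i => Finset.range (x i + 1)) with (∑ i, y i) = m,
        ∏ i, ((x i).choose (y i) : ℝ) := by
    rw [← Finset.prod_pow_eq_pow_sum]
    have e : ∀ i, (1 + Polynomial.X : Polynomial ℝ) ^ (x i) =
        ∑ k ∈ Finset.range (x i + 1), Polynomial.C ((x i).choose k : ℝ) * Polynomial.X ^ k := by
      intro i
      rw [add_comm, add_pow]
      refine Finset.sum_congr rfl fun k _ => ?_
      simp [mul_comm]
    simp_rw [e]
    rw [Finset.prod_univ_sum, Polynomial.finsetSum_coeff, Finset.sum_filter]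
    refine Finset.sum_congr rfl fun y _ => ?_
    rw [Finset.prod_mul_distrib, Finset.prod_pow_eq_pow_sum, ← map_prod,
      Polynomial.coeff_C_mul_X_pow]
    simp only [eq_comm]
  rw [Polynomial.coeff_one_add_X_pow] at key
  rw [key, Finset.mul_sum]
  refine Finset.sum_congr rfl fun y hy => ?_
  rw [(Finset.mem_filter.1 hy).2]

lemma pois_tail (t : ℝ) (ht : 0 ≤ t) (N : ℕ) :
    1 - ∑ m ∈ Finset.range (N + 1), poissonPMF t m ≤ Real.exp t * (1 / 2) ^ N := by
  have h1 : HasSum (fun m : ℕ => if m ∈ Finset.range (N + 1) then t ^ m / (m.factorial : ℝ) else 0)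
      (∑ m ∈ Finset.range (N + 1), t ^ m / (m.factorial : ℝ)) := by
    have := hasSum_sum_of_ne_finset_zero (L := SummationFilter.unconditional ℕ)
      (f := fun m : ℕ => if m ∈ Finset.range (N + 1) then t ^ m / (m.factorial : ℝ) else 0)
      (s := Finset.range (N + 1)) (by intro b hb; simp [hb])
    rwa [Finset.sum_congr rfl (fun m hm => if_pos hm)] at this
  have h2 := h1.add ((exp_hasSum (2 * t)).mul_left ((1 / 2 : ℝ) ^ N))
  have h3 := hasSum_le (fun m => ?_) (exp_hasSum t) h2
  · have e : ∑ m ∈ Finset.range (N + 1), poissonPMF t m =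
        Real.exp (-t) * ∑ m ∈ Finset.range (N + 1), t ^ m / (m.factorial : ℝ) := by
      rw [Finset.mul_sum]
      exact Finset.sum_congr rfl fun m _ => by rw [poissonPMF, mul_div_assoc]
    rw [e]
    have h4 := mul_le_mul_of_nonneg_left h3 (Real.exp_pos (-t)).le
    have e1 : Real.exp (-t) * Real.exp t = 1 := by rw [← Real.exp_add]; simp
    have e2 : Real.exp (2 * t) = Real.exp t * Real.exp t := by rw [← Real.exp_add]; ring_nf
    rw [e2, e1, mul_add] at h4
    have e3 : Real.exp (-t) * ((1 / 2) ^ N * (Real.exp t * Real.exp t)) =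
      (Real.exp (-t) * Real.exp t) * (Real.exp t * (1 / 2) ^ N) := by ring
    rw [e3, e1] at h4
    linarith
  · simp only [Finset.mem_range]
    split_ifs with hm
    · have : 0 ≤ (1 / 2 : ℝ) ^ N * ((2 * t) ^ m / (m.factorial : ℝ)) := by positivity
      linarith
    · rw [zero_add, mul_pow]
      have hNm : N ≤ m := by omega
      have : (1 : ℝ) ≤ (1 / 2) ^ N * 2 ^ m := by
        rw [← Nat.sub_add_cancel hNm, pow_add, mul_comm, mul_assoc, ← mul_pow]
        norm_num
        exact one_le_pow₀ (by norm_num)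
      have h0 : 0 ≤ t ^ m / (m.factorial : ℝ) := by positivity
      calc t ^ m / (m.factorial : ℝ) ≤ ((1 / 2) ^ N * 2 ^ m) * (t ^ m / (m.factorial : ℝ)) :=
            le_mul_of_one_le_left h0 this
        _ = _ := by ring

lemma pois_sum_le (t : ℝ) (ht : 0 ≤ t) (N : ℕ) :
    ∑ m ∈ Finset.range (N + 1), poissonPMF t m ≤ 1 := by
  have h : HasSum (poissonPMF t) 1 := by
    have := (exp_hasSum t).mul_left (Real.exp (-t))
    rw [← Real.exp_add] at this
    simp only [neg_add_cancel, Real.exp_zero, ← mul_div_assoc] at this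
    exact this
  exact sum_le_hasSum _ (fun i _ => by unfold poissonPMF; positivity) h

lemma jensen_fin {ι : Type*} (T : Finset ι) (k e : ι → ℝ) (hk : ∀ i ∈ T, 0 ≤ k i)
    (h1 : ∑ i ∈ T, k i ≤ 1) (L : ℝ) :
    (∑ i ∈ T, k i * e i + (1 - ∑ i ∈ T, k i) - L) ^ 2 ≤
      ∑ i ∈ T, k i * (e i - L) ^ 2 + (1 - ∑ i ∈ T, k i) * (1 - L) ^ 2 := by
  set κ := ∑ i ∈ T, k i with hκ
  set A := ∑ i ∈ T, k i * e i with hA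
  set μ := A + (1 - κ) with hμ
  have hnn : 0 ≤ ∑ i ∈ T, k i * (e i - μ) ^ 2 :=
    Finset.sum_nonneg fun i hi => mul_nonneg (hk i hi) (sq_nonneg _)
  have ex : ∀ c : ℝ, ∑ i ∈ T, k i * (e i - c) ^ 2 =
      ∑ i ∈ T, k i * e i ^ 2 - 2 * c * A + c ^ 2 * κ := by
    intro c
    rw [hA, hκ, Finset.mul_sum, Finset.mul_sum, ← Finset.sum_sub_distrib, ← Finset.sum_add_distrib]
    exact Finset.sum_congr rfl fun i _ => by ring
  rw [ex] at hnn ⊢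
  have h2 : 0 ≤ (1 - κ) * (1 - μ) ^ 2 := mul_nonneg (by linarith) (sq_nonneg _)
  have hA' : A = μ - (1 - κ) := by rw [hμ]; ring
  rw [hA'] at hnn ⊢
  nlinarith

/-- The subsampling kernel. -/
noncomputable def ker {S : ℕ} (t : ℝ) (x y : Fin S → ℕ) : ℝ :=
  poissonPMF t (∑ i, y i) / ((∑ i, x i).choose (∑ i, y i) : ℝ) * ∏ i, ((x i).choose (y i) : ℝ)

lemma ker_nonneg {S : ℕ} (t : ℝ) (ht : 0 ≤ t) (x y : Fin S → ℕ) : 0 ≤ ker t x y := by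
  unfold ker poissonPMF; positivity

lemma ker_sum {S : ℕ} (t : ℝ) (x : Fin S → ℕ) :
    ∑ y ∈ Fintype.piFinset (fun i => Finset.range (x i + 1)), ker t x y =
    ∑ m ∈ Finset.range (∑ i, x i + 1), poissonPMF t m := by
  unfold ker
  rw [vander x (fun m => poissonPMF t m / ((∑ i, x i).choose m : ℝ))]
  refine Finset.sum_congr rfl fun m hm => ?_
  have : 0 < (∑ i, x i).choose m := Nat.choose_pos (by rw [Finset.mem_range] at hm; omega)
  have : (0 : ℝ) < ((∑ i, x i).choose m : ℝ) := by exact_mod_cast this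
  field_simp

lemma prodPMFR_eq {S : ℕ} (t : ℝ) (p : Fin S → ℝ) (x : Fin S → ℕ) :
    prodPMFR t p x = Real.exp (-(t * ∑ i, p i)) *
      ∏ i, ((t * p i) ^ x i / ((x i).factorial : ℝ)) := by
  unfold prodPMFR poissonPMF
  simp_rw [mul_div_assoc]
  rw [Finset.prod_mul_distrib, ← Real.exp_sum, Finset.mul_sum, Finset.sum_neg_distrib]

lemma ker_push {S : ℕ} (n t : ℝ) (hn : 0 < n) (ht : 0 ≤ t) (p : Fin S → ℝ) (hp : ∀ i, 0 ≤ p i)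
    (hs : 0 < ∑ i, p i) (y : Fin S → ℕ) :
    ∑' x : Fin S → ℕ, ENNReal.ofReal (prodPMFR n p x * ker t x y) ≤
      ENNReal.ofReal (prodPMFR t (fun i => p i / ∑ j, p j) y) := by
  set s := ∑ i, p i with hsdef
  set Y := ∑ i, y i with hY
  have inj : Function.Injective (fun z : Fin S → ℕ => y + z) := add_right_injective y
  rw [← inj.tsum_eq]
  swap
  · intro x hx
    rw [Function.mem_support] at hx
    by_contra hcon
    apply hx
    have : ∃ i, x i < y i := by
      by_contra h
      push Not at h
      exact hcon ⟨fun i => x i - y i, by funext i; simp [h i]⟩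
    obtain ⟨i, hi⟩ := this
    have : ker t x y = 0 := by
      unfold ker
      rw [Finset.prod_eq_zero (Finset.mem_univ i) (by simp [Nat.choose_eq_zero_of_lt hi]), mul_zero]
    simp [this]
  set c : ℝ := Real.exp (-(n * s)) * (Real.exp (-t) * t ^ Y) *
    ∏ i, ((n * p i) ^ y i / ((y i).factorial : ℝ)) with hc
  have hc0 : 0 ≤ c := by
    have : 0 ≤ ∏ i, ((n * p i) ^ y i / ((y i).factorial : ℝ)) :=
      Finset.prod_nonneg fun i _ => by have := hp i; positivity
    positivity
  have hnp : ∀ i, 0 ≤ n * p i := fun i => mul_nonneg hn.le (hp i)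
  have key : ∀ z : Fin S → ℕ, ENNReal.ofReal (prodPMFR n p (y + z) * ker t (y + z) y) =
      (ENNReal.ofReal c * ENNReal.ofReal (((∑ i, z i).factorial : ℝ) / ((Y + ∑ i, z i).factorial : ℝ))) *
      ENNReal.ofReal (∏ i, ((n * p i) ^ z i / ((z i).factorial : ℝ))) := by
    intro z
    rw [← ENNReal.ofReal_mul hc0, ← ENNReal.ofReal_mul (by positivity)]
    congr 1
    rw [prodPMFR_eq, ker, poissonPMF]
    simp only [Pi.add_apply, Finset.sum_add_distrib]
    rw [← hY, ← hsdef, Nat.cast_add_choose]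
    simp_rw [Nat.cast_add_choose]
    have e : (∏ i, ((n * p i) ^ (y i + z i) / ((y i + z i).factorial : ℝ))) *
        ∏ i, (((y i + z i).factorial : ℝ) / (((y i).factorial : ℝ) * ((z i).factorial : ℝ))) =
        (∏ i, ((n * p i) ^ y i / ((y i).factorial : ℝ))) *
        ∏ i, ((n * p i) ^ z i / ((z i).factorial : ℝ)) := by
      rw [← Finset.prod_mul_distrib, ← Finset.prod_mul_distrib]
      refine Finset.prod_congr rfl fun i _ => ?_
      have : ((y i + z i).factorial : ℝ) ≠ 0 := by positivity
      field_simp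
      ring
    have h1 : ((Y + ∑ i, z i).factorial : ℝ) ≠ 0 := by positivity
    have h2 : ((∑ i, z i).factorial : ℝ) ≠ 0 := by positivity
    have h3 : (Y.factorial : ℝ) ≠ 0 := by positivity
    have e2 : Real.exp (-t) * t ^ Y / (Y.factorial : ℝ) /
        (((Y + ∑ i, z i).factorial : ℝ) / ((Y.factorial : ℝ) * ((∑ i, z i).factorial : ℝ))) =
        Real.exp (-t) * t ^ Y *
          (((∑ i, z i).factorial : ℝ) / ((Y + ∑ i, z i).factorial : ℝ)) := by
      field_simp
    rw [e2, hc]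
    linear_combination (Real.exp (-(n * s)) * (Real.exp (-t) * t ^ Y *
          (((∑ i, z i).factorial : ℝ) / ((Y + ∑ i, z i).factorial : ℝ)))) * e
  simp_rw [key]
  rw [group_tsum (fun i => n * p i) hnp (fun k => ENNReal.ofReal c *
    ENNReal.ofReal ((k.factorial : ℝ) / ((Y + k).factorial : ℝ))), ← Finset.mul_sum, ← hsdef]
  have hns : 0 < n * s := mul_pos hn hs
  have key2 : ∀ k : ℕ, ENNReal.ofReal c * ENNReal.ofReal ((k.factorial : ℝ) / ((Y + k).factorial : ℝ)) *
      ENNReal.ofReal ((n * s) ^ k / (k.factorial : ℝ)) =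
      ENNReal.ofReal (c / (n * s) ^ Y) *
        ENNReal.ofReal ((n * s) ^ (Y + k) / ((Y + k).factorial : ℝ)) := by
    intro k
    rw [← ENNReal.ofReal_mul hc0, ← ENNReal.ofReal_mul (by positivity),
      ← ENNReal.ofReal_mul (by positivity)]
    congr 1
    rw [pow_add]
    field_simp
  simp_rw [key2]
  rw [ENNReal.tsum_mul_left]
  have hle : ∑' k : ℕ, ENNReal.ofReal ((n * s) ^ (Y + k) / ((Y + k).factorial : ℝ)) ≤
      ENNReal.ofReal (Real.exp (n * s)) := by
    rw [← exp_tsum_ennreal _ hns.le]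
    exact ENNReal.tsum_comp_le_tsum_of_injective (add_right_injective Y)
      (fun k => ENNReal.ofReal ((n * s) ^ k / (k.factorial : ℝ)))
  refine (mul_le_mul_right hle _).trans ?_
  rw [← ENNReal.ofReal_mul (by positivity)]
  apply le_of_eq
  congr 1
  rw [prodPMFR_eq, ← Finset.sum_div, ← hsdef, div_self hs.ne', mul_one, hc]
  have e1 : ∏ i, ((t * (p i / s)) ^ y i / ((y i).factorial : ℝ)) =
      t ^ Y / (n * s) ^ Y * ∏ i, ((n * p i) ^ y i / ((y i).factorial : ℝ)) := by
    rw [hY, ← div_pow, ← Finset.prod_pow_eq_pow_sum, ← Finset.prod_mul_distrib]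
    refine Finset.prod_congr rfl fun i _ => ?_
    rw [← mul_div_assoc ((t / (n * s)) ^ y i), ← mul_pow]
    congr 2
    field_simp
  have e2 : Real.exp (-(n * s)) * Real.exp (n * s) = 1 := by rw [← Real.exp_add]; simp
  rw [e1]
  linear_combination (Real.exp (-t) * t ^ Y *
    (∏ i, ((n * p i) ^ y i / ((y i).factorial : ℝ))) / (n * s) ^ Y) * e2

lemma prodPMFR_half {S : ℕ} (n : ℝ) (hn : 0 < n) (p : Fin S → ℝ) (hp : ∀ i, 0 ≤ p i) (r : ℝ)
    (hr : 0 ≤ r) :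
    ∑' x : Fin S → ℕ, ENNReal.ofReal (prodPMFR n p x * r ^ (∑ i, x i)) =
      ENNReal.ofReal (Real.exp (n * (∑ i, p i) * (r - 1))) := by
  have hs : 0 ≤ ∑ i, p i := Finset.sum_nonneg fun i _ => hp i
  have key : ∀ x : Fin S → ℕ, ENNReal.ofReal (prodPMFR n p x * r ^ (∑ i, x i)) =
      ENNReal.ofReal (Real.exp (-(n * ∑ i, p i)) * r ^ (∑ i, x i)) *
      ENNReal.ofReal (∏ i, ((n * p i) ^ x i / ((x i).factorial : ℝ))) := by
    intro x
    rw [← ENNReal.ofReal_mul (by positivity), prodPMFR_eq]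
    congr 1; ring
  simp_rw [key]
  rw [group_tsum (fun i => n * p i) (fun i => mul_nonneg hn.le (hp i))
    (fun k => ENNReal.ofReal (Real.exp (-(n * ∑ i, p i)) * r ^ k)), ← Finset.mul_sum]
  have key2 : ∀ k : ℕ, ENNReal.ofReal (Real.exp (-(n * ∑ i, p i)) * r ^ k) *
      ENNReal.ofReal ((n * ∑ i, p i) ^ k / (k.factorial : ℝ)) =
      ENNReal.ofReal (Real.exp (-(n * ∑ i, p i))) *
        ENNReal.ofReal ((r * (n * ∑ i, p i)) ^ k / (k.factorial : ℝ)) := by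
    intro k
    rw [← ENNReal.ofReal_mul (by positivity), ← ENNReal.ofReal_mul (by positivity), mul_pow]
    congr 1; ring
  simp_rw [key2]
  rw [ENNReal.tsum_mul_left, exp_tsum_ennreal _ (by positivity), ← ENNReal.ofReal_mul (by positivity),
    ← Real.exp_add]
  congr 2; ring

lemma prodPMFR_nonneg {S : ℕ} (t : ℝ) (ht : 0 ≤ t) (p : Fin S → ℝ) (hp : ∀ i, 0 ≤ p i)
    (x : Fin S → ℕ) : 0 ≤ prodPMFR t p x := by
  unfold prodPMFR poissonPMF
  exact Finset.prod_nonneg fun i _ => by have := hp i; positivity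

lemma L1_normalize {S : ℕ} (p q : Fin S → ℝ) (hp : ∀ i, 0 ≤ p i) (hs : 0 < ∑ i, p i) :
    |L1dist p q - L1dist (fun i => p i / ∑ j, p j) q| ≤ |∑ i, p i - 1| := by
  set s := ∑ i, p i with hsdef
  unfold L1dist
  rw [← Finset.sum_sub_distrib]
  calc |∑ i, (|p i - q i| - |p i / s - q i|)| ≤ ∑ i, |(|p i - q i| - |p i / s - q i|)| :=
        Finset.abs_sum_le_sum_abs _ _
    _ ≤ ∑ i, p i * (|s - 1| / s) := by
        refine Finset.sum_le_sum fun i _ => (abs_abs_sub_abs_le_abs_sub _ _).trans ?_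
        have : p i - q i - (p i / s - q i) = p i * ((s - 1) / s) := by field_simp; ring
        rw [this, abs_mul, abs_of_nonneg (hp i), abs_div, abs_of_pos hs]
    _ = |s - 1| := by rw [← Finset.sum_mul, ← hsdef]; field_simp

lemma L1_le_two {S : ℕ} (p q : Fin S → ℝ) (hp : IsDist p) (hq : IsDist q) :
    (1 - L1dist p q) ^ 2 ≤ 1 := by
  have h0 : 0 ≤ L1dist p q := Finset.sum_nonneg fun i _ => abs_nonneg _
  have h2 : L1dist p q ≤ 2 := by
    calc L1dist p q ≤ ∑ i, (p i + q i) := by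
          refine Finset.sum_le_sum fun i _ => ?_
          rw [abs_le]; constructor <;> linarith [hp.1 i, hq.1 i]
      _ = 2 := by rw [Finset.sum_add_distrib, hp.2, hq.2]; norm_num
  nlinarith

/-- The averaged estimator. -/
noncomputable def avgEst {S : ℕ} (t : ℝ) (est : (Fin S → ℕ) → ℝ) (x : Fin S → ℕ) : ℝ :=
  ∑ y ∈ Fintype.piFinset (fun i => Finset.range (x i + 1)), ker t x y * est y +
    (1 - ∑ y ∈ Fintype.piFinset (fun i => Finset.range (x i + 1)), ker t x y)

lemma risk_bound {S : ℕ} (n t ε : ℝ) (hn : 0 < n) (ht : 0 ≤ t)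
    (q : Fin S → ℝ) (hq : IsDist q) (est : (Fin S → ℕ) → ℝ)
    (p : Fin S → ℝ) (hp : ApproxDist ε p) (hs : 0 < ∑ i, p i) :
    ∑' x : Fin S → ℕ, ENNReal.ofReal (prodPMFR n p x * (avgEst t est x - L1dist p q) ^ 2) ≤
      2 * (∑' y : Fin S → ℕ, ENNReal.ofReal (prodPMFR t (fun i => p i / ∑ j, p j) y *
        (est y - L1dist (fun i => p i / ∑ j, p j) q) ^ 2)) +
      2 * ENNReal.ofReal (Real.exp (t - n * (∑ i, p i) / 2)) + 2 * ENNReal.ofReal (ε ^ 2) := by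
  set p' : Fin S → ℝ := fun i => p i / ∑ j, p j with hp'
  set L' := L1dist p' q with hL'
  have hp'd : IsDist p' := ⟨fun i => div_nonneg (hp.1 i) hs.le, by
    rw [hp', ← Finset.sum_div, div_self hs.ne']⟩
  have hL2 := L1_le_two p' q hp'd hq
  have hLL : (L' - L1dist p q) ^ 2 ≤ ε ^ 2 := by
    have := (L1_normalize p q hp.1 hs).trans hp.2
    rw [← sq_abs, abs_sub_comm]
    exact pow_le_pow_left₀ (abs_nonneg _) this 2
  have hw := prodPMFR_nonneg n hn.le p hp.1
  have hw' := prodPMFR_nonneg t ht p' hp'd.1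
  have step : ∀ x : Fin S → ℕ,
      ENNReal.ofReal (prodPMFR n p x * (avgEst t est x - L1dist p q) ^ 2) ≤
      2 * (∑' y : Fin S → ℕ, ENNReal.ofReal (prodPMFR n p x * ker t x y) *
        ENNReal.ofReal ((est y - L') ^ 2)) +
      2 * (ENNReal.ofReal (Real.exp t) * ENNReal.ofReal (prodPMFR n p x * (1 / 2) ^ (∑ i, x i))) +
      2 * (ENNReal.ofReal (ε ^ 2) * ENNReal.ofReal (prodPMFR n p x * 1 ^ (∑ i, x i))) := by
    intro x
    set T := Fintype.piFinset (fun i => Finset.range (x i + 1)) with hT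
    have hJ := jensen_fin T (fun y => ker t x y) est (fun y _ => ker_nonneg t ht x y)
      (by rw [ker_sum]; exact pois_sum_le t ht _) L'
    have htail : 1 - ∑ y ∈ T, ker t x y ≤ Real.exp t * (1 / 2) ^ (∑ i, x i) := by
      rw [ker_sum]; exact pois_tail t ht _
    have htail0 : 0 ≤ 1 - ∑ y ∈ T, ker t x y := by
      rw [ker_sum]; linarith [pois_sum_le t ht (∑ i, x i)]
    have hA : (avgEst t est x - L') ^ 2 ≤
        ∑ y ∈ T, ker t x y * (est y - L') ^ 2 + Real.exp t * (1 / 2) ^ (∑ i, x i) := by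
      refine hJ.trans ?_
      have := mul_le_of_le_one_right htail0 hL2
      linarith
    have hB : (avgEst t est x - L1dist p q) ^ 2 ≤
        2 * (∑ y ∈ T, ker t x y * (est y - L') ^ 2) + 2 * (Real.exp t * (1 / 2) ^ (∑ i, x i)) +
        2 * ε ^ 2 := by
      nlinarith [sq_nonneg ((avgEst t est x - L') - (L' - L1dist p q))]
    have hC := mul_le_mul_of_nonneg_left hB (hw x)
    have hk := fun y => ker_nonneg t ht x y
    have hwx := hw x
    have hsn : 0 ≤ ∑ y ∈ T, prodPMFR n p x * ker t x y * (est y - L') ^ 2 :=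
      Finset.sum_nonneg fun y _ => by have := hk y; positivity
    refine (ENNReal.ofReal_le_ofReal hC).trans ?_
    have e : prodPMFR n p x * (2 * (∑ y ∈ T, ker t x y * (est y - L') ^ 2) +
        2 * (Real.exp t * (1 / 2) ^ (∑ i, x i)) + 2 * ε ^ 2) =
        2 * (∑ y ∈ T, prodPMFR n p x * ker t x y * (est y - L') ^ 2) +
        2 * (Real.exp t * (prodPMFR n p x * (1 / 2) ^ (∑ i, x i))) +
        2 * (ε ^ 2 * (prodPMFR n p x * 1 ^ (∑ i, x i))) := by
      simp_rw [mul_assoc (prodPMFR n p x)]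
      rw [← Finset.mul_sum]; simp only [one_pow]; ring
    rw [e, ENNReal.ofReal_add (by positivity) (by positivity),
      ENNReal.ofReal_add (by positivity) (by positivity)]
    simp only [ENNReal.ofReal_mul (show (0 : ℝ) ≤ 2 by norm_num),
      ENNReal.ofReal_mul (Real.exp_pos t).le, ENNReal.ofReal_mul (sq_nonneg ε), ENNReal.ofReal_ofNat]
    gcongr
    rw [ENNReal.ofReal_sum_of_nonneg (fun y _ => by have := hk y; positivity)]
    refine le_trans (le_of_eq ?_) (ENNReal.sum_le_tsum T)
    refine Finset.sum_congr rfl fun y _ => ?_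
    rw [ENNReal.ofReal_mul (mul_nonneg hwx (hk y))]
  refine (ENNReal.tsum_le_tsum step).trans ?_
  rw [ENNReal.tsum_add, ENNReal.tsum_add]
  simp only [ENNReal.tsum_mul_left]
  rw [prodPMFR_half n hn p hp.1 _ (by norm_num), prodPMFR_half n hn p hp.1 _ (by norm_num)]
  gcongr ?_ + ?_ + ?_
  · refine mul_le_mul_right ?_ _
    rw [ENNReal.tsum_comm]
    refine ENNReal.tsum_le_tsum fun y => ?_
    rw [ENNReal.tsum_mul_right, ENNReal.ofReal_mul (hw' y)]
    gcongr
    exact ker_push n t hn ht p hp.1 hs y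
  · rw [← ENNReal.ofReal_mul (Real.exp_pos _).le, ← Real.exp_add]
    apply le_of_eq; congr 3; ring
  · simp

/-- relating the minimax risk over approximate probability vectors to the
one over exact probability vectors. -/
theorem RP_approx_to_exact (S n : ℕ) (hS : 0 < S) (hn : 0 < n)
    (ε : ℝ) (hε0 : 0 < ε) (hε1 : ε < 1) (q : Fin S → ℝ) (hq : IsDist q) :
    ENNReal.ofReal (1 / 4) * RP S (n : ℝ) q ε -
        ENNReal.ofReal ((1 / 2) * Real.exp (-((n : ℝ) * (1 - ε) / 8))) -
        ENNReal.ofReal ((1 / 2) * ε ^ 2) ≤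
      RP S ((n : ℝ) * (1 - ε) / 4) q 0 := by
  have hn' : (0 : ℝ) < n := by exact_mod_cast hn
  have h1ε : 0 < 1 - ε := by linarith
  conv_rhs => rw [RP]
  refine le_iInf fun est => ?_
  rw [tsub_le_iff_right, tsub_le_iff_right]
  set t : ℝ := (n : ℝ) * (1 - ε) / 4 with ht
  have ht0 : 0 ≤ t := by positivity
  set R : ℝ≥0∞ := ⨆ p : {p : Fin S → ℝ // ApproxDist 0 p},
    ∑' x : Fin S → ℕ, ENNReal.ofReal (prodPMFR t p.1 x * (est x - L1dist p.1 q) ^ 2) with hR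
  have hmain : RP S (n : ℝ) q ε ≤
      2 * R + 2 * ENNReal.ofReal (Real.exp (-((n : ℝ) * (1 - ε) / 8))) +
        2 * ENNReal.ofReal (ε ^ 2) := by
    rw [RP]
    refine (iInf_le _ (avgEst t est)).trans (iSup_le fun p => ?_)
    obtain ⟨p, hp⟩ := p
    have hs1 : 1 - ε ≤ ∑ i, p i := by have := (abs_le.1 hp.2).1; linarith
    have hs : 0 < ∑ i, p i := by linarith
    refine (risk_bound (n : ℝ) t ε hn' ht0 q hq est p hp hs).trans ?_
    have hp0 : ApproxDist 0 (fun i => p i / ∑ j, p j) :=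
      ⟨fun i => div_nonneg (hp.1 i) hs.le, by rw [← Finset.sum_div, div_self hs.ne']; simp⟩
    gcongr
    · exact le_iSup (fun p : {p : Fin S → ℝ // ApproxDist 0 p} =>
        ∑' x : Fin S → ℕ, ENNReal.ofReal (prodPMFR t p.1 x * (est x - L1dist p.1 q) ^ 2)) ⟨_, hp0⟩
    · rw [ht]; nlinarith [mul_le_mul_of_nonneg_left hs1 hn'.le, mul_pos hn' h1ε]
  refine (mul_le_mul_right hmain _).trans ?_
  have c4 : ∀ a : ℝ≥0∞, ENNReal.ofReal (1 / 4) * (2 * a) = ENNReal.ofReal (1 / 2) * a := by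
    intro a
    rw [← mul_assoc, show (2 : ℝ≥0∞) = ENNReal.ofReal 2 by simp,
      ← ENNReal.ofReal_mul (by norm_num)]
    norm_num
  rw [mul_add, mul_add, c4, c4, c4, ENNReal.ofReal_mul (by norm_num),
    ENNReal.ofReal_mul (by norm_num), add_right_comm]
  gcongr
  calc ENNReal.ofReal (1 / 2) * R ≤ 1 * R := by
        gcongr; rw [← ENNReal.ofReal_one]; exact ENNReal.ofReal_le_ofReal (by norm_num)
    _ = R := one_mul R
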